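/- Let Ω ⊂ ℝ² be open and bounded, μ ∈ [0,1], and let ψ ∈ C¹(cl(Ω)) ∩ C³(Ω) satisfy ℱ(μ,ψ) = 0 in Ω and ψ(ξ) > √(1+|ξ|²) for all ξ ∈ Ω. Then the maximum of |Dψ| over cl(Ω) is attained on the boundary: max_{cl(Ω)} |Dψ| = max_{∂Ω} |Dψ|. -/

import Mathlib

open Real Set

/-- Partial derivative in the first conical coordinate. -/
noncomputable def pd1 (f : ℝ × ℝ → ℝ) (x : ℝ × ℝ) : ℝ := fderiv ℝ f x (1, 0)

/-- Partial derivative in the second conical coordinate. -/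
noncomputable def pd2 (f : ℝ × ℝ → ℝ) (x : ℝ × ℝ) : ℝ := fderiv ℝ f x (0, 1)

/-- `D²f[a,b] = Σ_{i,j} a_i b_j ∂_{ij} f` evaluated at `x`. -/
noncomputable def D2 (f : ℝ × ℝ → ℝ) (a b x : ℝ × ℝ) : ℝ :=
    a.1 * b.1 * pd1 (pd1 f) x + a.1 * b.2 * pd1 (pd2 f) x
  + a.2 * b.1 * pd2 (pd1 f) x + a.2 * b.2 * pd2 (pd2 f) x

/-- The gradient `Df` as a vector of `ℝ × ℝ`. -/
noncomputable def gradv (f : ℝ × ℝ → ℝ) (x : ℝ × ℝ) : ℝ × ℝ := (pd1 f x, pd2 f x)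

/-- `Df · ξ` at `x = ξ`. -/
noncomputable def dotxi (f : ℝ × ℝ → ℝ) (x : ℝ × ℝ) : ℝ := pd1 f x * x.1 + pd2 f x * x.2

/-- `χ = ψ − Dψ·ξ`. -/
noncomputable def chiF (ψ : ℝ × ℝ → ℝ) (x : ℝ × ℝ) : ℝ := ψ x - dotxi ψ x

/-- The squared scaled sound speed `a² = |Dψ|² + χ² − 1`. -/
noncomputable def sqSound (ψ : ℝ × ℝ → ℝ) (x : ℝ × ℝ) : ℝ :=
  (pd1 ψ x) ^ 2 + (pd2 ψ x) ^ 2 + (chiF ψ x) ^ 2 - 1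

/-- `ℱ(μ,ψ) = a²(Δψ + D²ψ[ξ,ξ]) − μ D²ψ[Dψ − χξ, Dψ − χξ]`;
`μ = 1` is the conical Chaplygin potential equation. -/
noncomputable def Fop (μ : ℝ) (ψ : ℝ × ℝ → ℝ) (x : ℝ × ℝ) : ℝ :=
  sqSound ψ x * (pd1 (pd1 ψ) x + pd2 (pd2 ψ) x + D2 ψ x x x)
    - μ * D2 ψ (gradv ψ x - chiF ψ x • x) (gradv ψ x - chiF ψ x • x) x

/-- `b²(w) = w² − 1 + (1+|ξ|²)(|Dw|² + (Dw·ξ)²)`. -/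
noncomputable def b2 (w : ℝ × ℝ → ℝ) (x : ℝ × ℝ) : ℝ :=
  (w x) ^ 2 - 1
    + (1 + x.1 ^ 2 + x.2 ^ 2) * ((pd1 w x) ^ 2 + (pd2 w x) ^ 2 + (dotxi w x) ^ 2)

/-- The operator `𝒩_μ`. -/
noncomputable def Nop (μ : ℝ) (w : ℝ × ℝ → ℝ) (x : ℝ × ℝ) : ℝ :=
  b2 w x * (pd1 (pd1 w) x + pd2 (pd2 w) x + D2 w x x x)
    - μ * (1 + x.1 ^ 2 + x.2 ^ 2) *
        D2 w (gradv w x + dotxi w x • x) (gradv w x + dotxi w x • x) x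
    + 2 * ((1 - μ) * b2 w x + μ * ((w x) ^ 2 - 1)) * dotxi w x
    + ((2 - μ) * b2 w x + μ * ((w x) ^ 2 - 1)) * w x / (1 + x.1 ^ 2 + x.2 ^ 2)

/-- Local uniform ellipticity of `𝒩_μ` with respect to `w` on `Ω`: on each compact
subset the principal-part matrix `b²(w)(I₂+ξξᵀ) − μ(1+|ξ|²)qqᵀ`, `q = Dw + (Dw·ξ)ξ`,
has eigenvalues bounded below by a positive constant. -/
def LocUnifElliptic (μ : ℝ) (w : ℝ × ℝ → ℝ) (Ω : Set (ℝ × ℝ)) : Prop :=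
  ∀ K : Set (ℝ × ℝ), K ⊆ Ω → IsCompact K → ∃ lam : ℝ, 0 < lam ∧
    ∀ x ∈ K, ∀ v : ℝ × ℝ,
      lam * (v.1 ^ 2 + v.2 ^ 2) ≤
        b2 w x * (v.1 ^ 2 + v.2 ^ 2 + (x.1 * v.1 + x.2 * v.2) ^ 2)
          - μ * (1 + x.1 ^ 2 + x.2 ^ 2) *
              ((pd1 w x + dotxi w x * x.1) * v.1 + (pd2 w x + dotxi w x * x.2) * v.2) ^ 2

/-!
Differentiating `ℱ(μ, ψ) = 0` in a direction `e` gives a linear second-order equation for `∂ₑψ`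
without zeroth-order term: `ℱ(μ, ψ)` depends on the value of `ψ` only through `χ`, and
`∂ₑχ = −D²ψ[e, ξ]` involves second derivatives alone. The equation is elliptic where
`ψ² > 1 + |ξ|²`, so the weak maximum principle bounds every `∂ₑψ` on `cl(Ω)` by its boundary
values, and `|Dψ|` is the supremum of `∂ₑψ` over unit vectors `e`.
-/

open Filter Topology

section MaximumPrinciple

theorem deriv_deriv_nonpos_of_isLocalMax {f : ℝ → ℝ} {a : ℝ} (hf : ContinuousAt f a)
    (hmax : IsLocalMax f a) : deriv (deriv f) a ≤ 0 := by
  by_contra! hpos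
  have hmin : IsLocalMin f a := isLocalMin_of_deriv_deriv_pos hpos hmax.deriv_eq_zero hf
  have hconst : f =ᶠ[𝓝 a] fun _ => f a := by
    filter_upwards [hmax, hmin] with t h₁ h₂ using le_antisymm h₁ h₂
  have hzero : deriv (deriv f) a = 0 := by
    rw [hconst.deriv.deriv_eq]
    simp
  exact hpos.ne' hzero

theorem le_on_closure_of_forall_not_isLocalMax {X : Type*} [TopologicalSpace X] {Ω : Set X}
    (hΩ : IsOpen Ω) (hcpt : IsCompact (closure Ω)) {u : X → ℝ} (hu : ContinuousOn u (closure Ω))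
    (hbarrier : ∀ K ⊆ Ω, IsCompact K → ∃ h : X → ℝ, ContinuousOn h (closure Ω) ∧
      ∀ ε > 0, ∀ x ∈ K, ¬ IsLocalMax (fun y => u y + ε * h y) x)
    {m : ℝ} (hm : ∀ x ∈ frontier Ω, u x ≤ m) : ∀ x ∈ closure Ω, u x ≤ m := by
  by_contra! ⟨z, hz, hmz⟩
  obtain ⟨c, hmc, hcz⟩ := exists_between hmz
  let K : Set X := closure Ω ∩ u ⁻¹' Ici c
  have hKcpt : IsCompact K := hcpt.of_isClosed_subset
    (hu.preimage_isClosed_of_isClosed isClosed_closure isClosed_Ici) inter_subset_left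
  have hKΩ : K ⊆ Ω := by
    rintro x ⟨hx, hcx⟩
    by_contra hxΩ
    exact (hmc.trans_le hcx).not_ge (hm x (hΩ.frontier_eq ▸ ⟨hx, hxΩ⟩))
  obtain ⟨h, hh, hnomax⟩ := hbarrier K hKΩ hKcpt
  obtain ⟨C, hC⟩ := hcpt.exists_bound_of_continuousOn hh
  have hC₀ : 0 ≤ C := (norm_nonneg _).trans (hC z hz)
  obtain ⟨ε, hε, hεC⟩ : ∃ ε > 0, ε * (2 * C) ≤ u z - c := by
    refine ⟨(u z - c) / (2 * C + 1), div_pos (by linarith) (by linarith), ?_⟩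
    rw [div_mul_eq_mul_div, div_le_iff₀ (by linarith)]
    nlinarith
  obtain ⟨x, hx, hxmax⟩ :=
    hcpt.exists_isMaxOn ⟨z, hz⟩ (hu.add (continuousOn_const.mul hh : ContinuousOn (ε * h ·) _))
  have hxK : x ∈ K := by
    refine ⟨hx, ?_⟩
    have hzx : u z + ε * h z ≤ u x + ε * h x := hxmax hz
    have hgap : ε * (h x - h z) ≤ ε * (2 * C) := by
      gcongr
      linarith [(abs_le.1 (hC x hx)).2, (abs_le.1 (hC z hz)).1]
    change c ≤ u x
    linarith
  exact hnomax ε hε x hxK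
    (hxmax.isLocalMax (mem_of_superset (hΩ.mem_nhds (hKΩ hxK)) subset_closure))

theorem sSup_image_closure_eq_sSup_image_frontier {X : Type*} [TopologicalSpace X] {Ω : Set X}
    (hcpt : IsCompact (closure Ω)) {f : X → ℝ} (hf : ContinuousOn f (closure Ω))
    (hmax : ∀ m, (∀ x ∈ frontier Ω, f x ≤ m) → ∀ x ∈ closure Ω, f x ≤ m) :
    sSup (f '' closure Ω) = sSup (f '' frontier Ω) := by
  have hsub : frontier Ω ⊆ closure Ω := frontier_subset_closure
  obtain hempty | hne := (frontier Ω).eq_empty_or_nonempty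
  · have hΩ : closure Ω = ∅ := eq_empty_of_forall_notMem fun x hx =>
      (sub_one_lt (f x)).not_ge (hmax (f x - 1) (by simp [hempty]) x hx)
    rw [hempty, hΩ]
  · have hbdd : BddAbove (f '' closure Ω) := hcpt.bddAbove_image hf
    refine le_antisymm ?_ (csSup_le_csSup hbdd (hne.image f) (image_mono hsub))
    refine csSup_le ((hne.mono hsub).image f) (forall_mem_image.2 (hmax _ fun x hx => ?_))
    exact le_csSup (hbdd.mono (image_mono hsub)) (mem_image_of_mem f hx)

variable {E : Type*} [NormedAddCommGroup E] [NormedSpace ℝ E]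

theorem second_fderiv_apply_self_nonpos_of_isLocalMax {f : E → ℝ} {f' : E → E →L[ℝ] ℝ}
    {f'' : E →L[ℝ] E →L[ℝ] ℝ} {x : E} (hf : ∀ᶠ y in 𝓝 x, HasFDerivAt f (f' y) y)
    (hf' : HasFDerivAt f' f'' x) (hmax : IsLocalMax f x) (v : E) : f'' v v ≤ 0 := by
  let γ : ℝ → E := fun t => x + t • v
  have hγ₀ : γ 0 = x := by simp [γ]
  have hγ (t : ℝ) : HasDerivAt γ v t := by
    simpa [γ] using ((hasDerivAt_id t).smul_const v).const_add x
  have hγx : Tendsto γ (𝓝 0) (𝓝 x) := hγ₀ ▸ (hγ 0).continuousAt.tendsto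
  have hderiv : deriv (f ∘ γ) =ᶠ[𝓝 0] fun t => f' (γ t) v := by
    filter_upwards [hγx.eventually hf] with t ht using (ht.comp_hasDerivAt t (hγ t)).deriv
  have hderiv₂ : deriv (deriv (f ∘ γ)) 0 = f'' v v := by
    rw [hderiv.deriv_eq]
    have h := ((hγ₀.symm ▸ hf').comp_hasDerivAt 0 (hγ 0)).clm_apply (hasDerivAt_const 0 v)
    simpa using h.deriv
  rw [← hderiv₂]
  refine deriv_deriv_nonpos_of_isLocalMax ?_ ?_
  · exact ContinuousAt.comp (hγ₀ ▸ hf.self_of_nhds.continuousAt) (hγ 0).continuousAt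
  · filter_upwards [hγx.eventually hmax] with t ht
    simpa [hγ₀] using ht

theorem hasFDerivAt_exp_mul_apply (ℓ : E →L[ℝ] ℝ) (lam : ℝ) (y : E) :
    HasFDerivAt (fun y => exp (lam * ℓ y)) ((lam * exp (lam * ℓ y)) • ℓ) y := by
  refine ((ℓ.hasFDerivAt (x := y)).const_mul lam).exp.congr_fderiv ?_
  rw [smul_smul, mul_comm]

/-- The comparison function `exp (lam * ℓ)` works because its second derivative
`lam² exp (lam * ℓ) ℓ ⊗ ℓ` beats its first derivative for large `lam`. -/
theorem not_isLocalMax_add_exp {u : E → ℝ} {x b : E} {ℓ : E →L[ℝ] ℝ}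
    {L : (E →L[ℝ] E →L[ℝ] ℝ) →ₗ[ℝ] ℝ} (hu : ContDiffAt ℝ 2 u x)
    (hL : ∀ H : E →L[ℝ] E →L[ℝ] ℝ, (∀ v, H v v ≤ 0) → L H ≤ 0)
    (hsub : 0 ≤ L (fderiv ℝ (fderiv ℝ u) x) + fderiv ℝ u x b)
    {lam ε : ℝ} (hlam : 0 < lam) (hε : 0 < ε) (hpos : 0 < lam * L (ℓ.smulRight ℓ) + ℓ b) :
    ¬ IsLocalMax (fun y => u y + ε * exp (lam * ℓ y)) x := by
  intro hmax
  let k : E → ℝ := fun y => ε * (lam * exp (lam * ℓ y))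
  have hk : 0 < k x := by positivity
  have hfst : ∀ᶠ y in 𝓝 x, HasFDerivAt (fun y => u y + ε * exp (lam * ℓ y))
      (fderiv ℝ u y + k y • ℓ) y := by
    filter_upwards [hu.eventually (by simp)] with y hy
    refine ((hy.differentiableAt two_ne_zero).hasFDerivAt.add
      ((hasFDerivAt_exp_mul_apply ℓ lam y).const_mul ε)).congr_fderiv ?_
    rw [smul_smul]
  have hsnd : HasFDerivAt (fun y => fderiv ℝ u y + k y • ℓ)
      (fderiv ℝ (fderiv ℝ u) x + (lam * k x) • ℓ.smulRight ℓ) x := by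
    refine (((hu.fderiv_right (m := 1) le_rfl).differentiableAt one_ne_zero).hasFDerivAt.add
      ((((hasFDerivAt_exp_mul_apply ℓ lam x).const_mul lam).const_mul ε).smul_const
        ℓ)).congr_fderiv ?_
    ext v w
    simp only [k, add_apply, ContinuousLinearMap.smulRight_apply, smul_apply, smul_eq_mul]
    ring
  have hcrit : fderiv ℝ u x b = -(k x * ℓ b) := by
    have hzero := DFunLike.congr_fun (hmax.hasFDerivAt_eq_zero hfst.self_of_nhds) b
    simp only [add_apply, smul_apply, smul_eq_mul, zero_apply] at hzero
    linarith
  have hsecond : L (fderiv ℝ (fderiv ℝ u) x) + lam * k x * L (ℓ.smulRight ℓ) ≤ 0 := by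
    simpa using hL _ (second_fderiv_apply_self_nonpos_of_isLocalMax hfst hsnd hmax)
  have hgain : 0 < k x * (lam * L (ℓ.smulRight ℓ) + ℓ b) := mul_pos hk hpos
  linarith

theorem exists_pos_forall_mul_add_pos {X : Type*} [TopologicalSpace X] {K : Set X}
    (hK : IsCompact K) {α β : X → ℝ} (hα : ContinuousOn α K) (hβ : ContinuousOn β K)
    (hpos : ∀ x ∈ K, 0 < α x) : ∃ lam > 0, ∀ x ∈ K, 0 < lam * α x + β x := by
  obtain ⟨C, hC⟩ := hK.exists_bound_of_continuousOn (hβ.div hα fun x hx => (hpos x hx).ne')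
  refine ⟨|C| + 1, by positivity, fun x hx => ?_⟩
  have hlt : -(|C| + 1) < β x / α x := by
    have hle : -C ≤ β x / α x := (abs_le.1 (hC x hx)).1
    linarith [le_abs_self C]
  linarith [(lt_div_iff₀ (hpos x hx)).1 hlt]

/-- Degenerate ellipticity suffices: `L x` is monotone, and strictly positive only on the single
form `ℓ ⊗ ℓ` that drives the barrier. -/
theorem le_on_closure_of_elliptic {Ω : Set E} (hΩ : IsOpen Ω) (hcpt : IsCompact (closure Ω))
    {u : E → ℝ} (hu : ContinuousOn u (closure Ω)) (hu₂ : ContDiffOn ℝ 2 u Ω)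
    {L : E → (E →L[ℝ] E →L[ℝ] ℝ) →ₗ[ℝ] ℝ} {b : E → E} {ℓ : E →L[ℝ] ℝ}
    (hL : ∀ x ∈ Ω, ∀ H : E →L[ℝ] E →L[ℝ] ℝ, (∀ v, H v v ≤ 0) → L x H ≤ 0)
    (hℓ : ∀ x ∈ Ω, 0 < L x (ℓ.smulRight ℓ))
    (hLc : ContinuousOn (fun x => L x (ℓ.smulRight ℓ)) Ω)
    (hbc : ContinuousOn (fun x => ℓ (b x)) Ω)
    (hsub : ∀ x ∈ Ω, 0 ≤ L x (fderiv ℝ (fderiv ℝ u) x) + fderiv ℝ u x (b x))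
    {m : ℝ} (hm : ∀ x ∈ frontier Ω, u x ≤ m) : ∀ x ∈ closure Ω, u x ≤ m := by
  refine le_on_closure_of_forall_not_isLocalMax hΩ hcpt hu (fun K hKΩ hK => ?_) hm
  obtain ⟨lam, hlam, hpos⟩ := exists_pos_forall_mul_add_pos hK (hLc.mono hKΩ) (hbc.mono hKΩ)
    fun x hx => hℓ x (hKΩ hx)
  refine ⟨fun y => exp (lam * ℓ y), by fun_prop, fun ε hε x hx => ?_⟩
  have hxΩ := hKΩ hx
  exact not_isLocalMax_add_exp (hu₂.contDiffAt (hΩ.mem_nhds hxΩ)) (hL x hxΩ) (hsub x hxΩ) hlam hε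
    (hpos x hx)

end MaximumPrinciple

section IteratedDerivatives

variable {E F : Type*} [NormedAddCommGroup E] [NormedSpace ℝ E] [NormedAddCommGroup F]
  [NormedSpace ℝ F] {f : E → F} {x : E}

theorem fderiv_fderiv_apply_const (hf : ContDiffAt ℝ 2 f x) (e : E) :
    fderiv ℝ (fun y => fderiv ℝ f y e) x = fderiv ℝ (fderiv ℝ f) x e := by
  have hdiff : DifferentiableAt ℝ (fderiv ℝ f) x :=
    (hf.fderiv_right (m := 1) le_rfl).differentiableAt one_ne_zero
  ext v
  rw [fderiv_clm_apply hdiff (differentiableAt_const e)]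
  simpa using (hf.isSymmSndFDerivAt (by simp)).eq v e

theorem fderiv_fderiv_fderiv_apply_const (hf : ContDiffAt ℝ 3 f x) (e : E) :
    fderiv ℝ (fderiv ℝ (fun y => fderiv ℝ f y e)) x =
      fderiv ℝ (fderiv ℝ (fderiv ℝ f)) x e := by
  have hev : fderiv ℝ (fun y => fderiv ℝ f y e) =ᶠ[𝓝 x] fun y => fderiv ℝ (fderiv ℝ f) y e := by
    filter_upwards [(hf.of_le (by norm_num : (2 : WithTop ℕ∞) ≤ 3)).eventually (by simp)] with y hy
    exact fderiv_fderiv_apply_const hy e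
  rw [hev.fderiv_eq, fderiv_fderiv_apply_const (hf.fderiv_right (by norm_num))]

theorem hasFDerivAt_bilin_apply_self {B : E → E →L[ℝ] E →L[ℝ] F}
    {B' : E →L[ℝ] E →L[ℝ] E →L[ℝ] F} {v : E → E} {v' : E →L[ℝ] E} (hB : HasFDerivAt B B' x)
    (hsymm : ∀ a b, B x a b = B x b a) (hv : HasFDerivAt v v' x) :
    HasFDerivAt (fun y => B y (v y) (v y))
      ((B'.flip (v x)).flip (v x) + (2 : ℝ) • (B x (v x)).comp v') x := by
  refine ((hB.clm_apply hv).clm_apply hv).congr_fderiv (ContinuousLinearMap.ext fun e => ?_)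
  simp only [ContinuousLinearMap.flip_add, add_apply, ContinuousLinearMap.comp_apply,
    ContinuousLinearMap.flip_apply, hsymm (v' e), two_smul]
  abel

end IteratedDerivatives

section PlaneLinearAlgebra

theorem sqrt_sq_add_sq_le_iff {a b m : ℝ} :
    √(a ^ 2 + b ^ 2) ≤ m ↔ ∀ θ, cos θ * a + sin θ * b ≤ m := by
  refine ⟨fun h θ => (le_sqrt_of_sq_le ?_).trans h, fun h => ?_⟩
  · nlinarith [sq_nonneg (cos θ * b - sin θ * a), sin_sq_add_cos_sq θ]
  · let z : ℂ := ⟨a, b⟩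
    have hcos : ‖z‖ * cos z.arg = a := Complex.norm_mul_cos_arg z
    have hsin : ‖z‖ * sin z.arg = b := Complex.norm_mul_sin_arg z
    calc √(a ^ 2 + b ^ 2) = ‖z‖ := (Complex.norm_eq_sqrt_sq_add_sq z).symm
      _ = ‖z‖ * (cos z.arg ^ 2 + sin z.arg ^ 2) := by rw [cos_sq_add_sin_sq, mul_one]
      _ = cos z.arg * a + sin z.arg * b := by rw [← hcos, ← hsin]; ring
      _ ≤ m := h _

theorem apply_eq_fst_mul_add_snd_mul (ℓ : ℝ × ℝ →L[ℝ] ℝ) (v : ℝ × ℝ) :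
    ℓ v = v.1 * ℓ (1, 0) + v.2 * ℓ (0, 1) := by
  conv_lhs => rw [show v = v.1 • ((1 : ℝ), (0 : ℝ)) + v.2 • ((0 : ℝ), (1 : ℝ)) by ext <;> simp]
  simp only [map_add, map_smul, smul_eq_mul]

theorem apply_prodMk_comm (ℓ m : ℝ × ℝ →L[ℝ] ℝ) :
    ℓ (m (1, 0), m (0, 1)) = m (ℓ (1, 0), ℓ (0, 1)) := by
  rw [apply_eq_fst_mul_add_snd_mul ℓ (m _, _), apply_eq_fst_mul_add_snd_mul m (ℓ _, _)]
  ring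

theorem bilin_apply_eq (H : ℝ × ℝ →L[ℝ] ℝ × ℝ →L[ℝ] ℝ) (v w : ℝ × ℝ) :
    H v w = v.1 * w.1 * H (1, 0) (1, 0) + v.1 * w.2 * H (1, 0) (0, 1)
      + v.2 * w.1 * H (0, 1) (1, 0) + v.2 * w.2 * H (0, 1) (0, 1) := by
  have h := apply_eq_fst_mul_add_snd_mul (H.flip w) v
  simp only [ContinuousLinearMap.flip_apply] at h
  rw [h, apply_eq_fst_mul_add_snd_mul (H (1, 0)) w, apply_eq_fst_mul_add_snd_mul (H (0, 1)) w]
  ring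

end PlaneLinearAlgebra

section ConicalOperator

variable {μ : ℝ} {ψ : ℝ × ℝ → ℝ} {x : ℝ × ℝ}

/-- The vector `q = Dψ − χξ`: the velocity `(Dψ, χ)` of the three-dimensional conical flow with
potential `z ψ(x/z, y/z)`, projected along the ray through `(ξ, 1)` onto the plane `z = 0`. -/
noncomputable def conicalVelocity (ψ : ℝ × ℝ → ℝ) (x : ℝ × ℝ) : ℝ × ℝ :=
  gradv ψ x - chiF ψ x • x

/-- The operator `Δ + D²[ξ, ξ]` as a linear functional of the Hessian. -/
noncomputable def conicalTrace (x : ℝ × ℝ) : (ℝ × ℝ →L[ℝ] ℝ × ℝ →L[ℝ] ℝ) →ₗ[ℝ] ℝ where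
  toFun H := H (1, 0) (1, 0) + H (0, 1) (0, 1) + H x x
  map_add' G H := by simp only [add_apply]; ring
  map_smul' c H := by simp only [smul_apply, smul_eq_mul, RingHom.id_apply]; ring

/-- The principal part `H ↦ a² (tr H + H[ξ, ξ]) − μ H[q, q]` of `ℱ(μ, ·)` with coefficients frozen
at `ψ`, as a linear functional of the Hessian. -/
noncomputable def principalPart (μ : ℝ) (ψ : ℝ × ℝ → ℝ) (x : ℝ × ℝ) :
    (ℝ × ℝ →L[ℝ] ℝ × ℝ →L[ℝ] ℝ) →ₗ[ℝ] ℝ where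
  toFun H :=
    sqSound ψ x * conicalTrace x H - μ * H (conicalVelocity ψ x) (conicalVelocity ψ x)
  map_add' G H := by simp only [map_add, add_apply]; ring
  map_smul' c H := by simp only [map_smul, smul_apply, smul_eq_mul, RingHom.id_apply]; ring

theorem principalPart_apply (H : ℝ × ℝ →L[ℝ] ℝ × ℝ →L[ℝ] ℝ) :
    principalPart μ ψ x H =
      sqSound ψ x * conicalTrace x H - μ * H (conicalVelocity ψ x) (conicalVelocity ψ x) :=
  rfl

theorem conicalTrace_apply (H : ℝ × ℝ →L[ℝ] ℝ × ℝ →L[ℝ] ℝ) :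
    conicalTrace x H = H (1, 0) (1, 0) + H (0, 1) (0, 1) + H x x :=
  rfl

theorem D2_eq_fderiv_fderiv (hψ : DifferentiableAt ℝ (fderiv ℝ ψ) x) (v w : ℝ × ℝ) :
    D2 ψ v w x = fderiv ℝ (fderiv ℝ ψ) x v w := by
  have hpd (e d : ℝ × ℝ) :
      fderiv ℝ (fun y => fderiv ℝ ψ y e) x d = fderiv ℝ (fderiv ℝ ψ) x d e := by
    simp [fderiv_clm_apply hψ (differentiableAt_const e)]
  rw [bilin_apply_eq _ v w, ← hpd, ← hpd, ← hpd, ← hpd]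
  rfl

theorem Fop_eq_principalPart (hψ : DifferentiableAt ℝ (fderiv ℝ ψ) x) :
    Fop μ ψ x = principalPart μ ψ x (fderiv ℝ (fderiv ℝ ψ) x) := by
  have h₁₁ : pd1 (pd1 ψ) x = D2 ψ (1, 0) (1, 0) x := by simp [D2]
  have h₂₂ : pd2 (pd2 ψ) x = D2 ψ (0, 1) (0, 1) x := by simp [D2]
  rw [Fop, h₁₁, h₂₂, principalPart_apply, conicalTrace_apply]
  simp only [D2_eq_fderiv_fderiv hψ, conicalVelocity]

theorem chiF_eq_sub_fderiv_apply : chiF ψ x = ψ x - fderiv ℝ ψ x x := by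
  rw [apply_eq_fst_mul_add_snd_mul _ x, chiF, dotxi, pd1, pd2]
  ring

/-- With `P = (Dψ, χ)` and `X = (ξ, 1)`, so that `P · X = ψ` and `a² = |P|² − 1`, the principal
part splits along the orthogonal directions `X`, the component of `P` orthogonal to `X`, and
`P × X`; the last one contributes the square `H[τ, τ]`. -/
theorem mul_principalPart_eq (H : ℝ × ℝ →L[ℝ] ℝ × ℝ →L[ℝ] ℝ) :
    ∃ τ : ℝ × ℝ, (1 + x.1 ^ 2 + x.2 ^ 2) * principalPart μ ψ x H =
      (ψ x ^ 2 - (1 + x.1 ^ 2 + x.2 ^ 2)) * conicalTrace x H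
        + (1 - μ) * (1 + x.1 ^ 2 + x.2 ^ 2) * H (conicalVelocity ψ x) (conicalVelocity ψ x)
        + H τ τ := by
  let q := conicalVelocity ψ x
  let k := q.1 * x.2 - q.2 * x.1
  let τ : ℝ × ℝ := (q.2 - k * x.1, -q.1 - k * x.2)
  refine ⟨τ, ?_⟩
  have hψ : ψ x = chiF ψ x + pd1 ψ x * x.1 + pd2 ψ x * x.2 := by simp only [chiF, dotxi]; ring
  rw [principalPart_apply, conicalTrace_apply, bilin_apply_eq H x, bilin_apply_eq H τ,
    bilin_apply_eq H (conicalVelocity ψ x), hψ]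
  simp only [τ, k, q, sqSound, conicalVelocity, gradv, Prod.fst_sub, Prod.snd_sub, Prod.smul_fst,
    Prod.smul_snd, smul_eq_mul]
  ring

theorem principalPart_nonpos (hμ : μ ≤ 1) (hψ : 1 + x.1 ^ 2 + x.2 ^ 2 ≤ ψ x ^ 2)
    {H : ℝ × ℝ →L[ℝ] ℝ × ℝ →L[ℝ] ℝ} (hH : ∀ v, H v v ≤ 0) : principalPart μ ψ x H ≤ 0 := by
  have htr : conicalTrace x H ≤ 0 := add_nonpos (add_nonpos (hH _) (hH _)) (hH _)
  obtain ⟨τ, hτ⟩ := mul_principalPart_eq (μ := μ) (ψ := ψ) (x := x) H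
  have hN : 0 < 1 + x.1 ^ 2 + x.2 ^ 2 := by positivity
  refine nonpos_of_mul_nonpos_right (hτ.trans_le ?_) hN
  exact add_nonpos (add_nonpos (mul_nonpos_of_nonneg_of_nonpos (sub_nonneg.2 hψ) htr)
    (mul_nonpos_of_nonneg_of_nonpos (mul_nonneg (sub_nonneg.2 hμ) hN.le) (hH _))) (hH τ)

theorem conicalTrace_smulRight_self_pos {ℓ : ℝ × ℝ →L[ℝ] ℝ} (hℓ : ℓ ≠ 0) :
    0 < conicalTrace x (ℓ.smulRight ℓ) := by
  contrapose! hℓ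
  have hsum : ℓ (1, 0) * ℓ (1, 0) + ℓ (0, 1) * ℓ (0, 1) + ℓ x * ℓ x ≤ 0 := hℓ
  have h₁ : ℓ (1, 0) = 0 := by nlinarith only [hsum]
  have h₂ : ℓ (0, 1) = 0 := by nlinarith only [hsum]
  ext1 <;> ext <;> simp [h₁, h₂]

theorem principalPart_smulRight_self_pos (hμ : μ ≤ 1) (hψ : 1 + x.1 ^ 2 + x.2 ^ 2 < ψ x ^ 2)
    {ℓ : ℝ × ℝ →L[ℝ] ℝ} (hℓ : ℓ ≠ 0) : 0 < principalPart μ ψ x (ℓ.smulRight ℓ) := by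
  have hsq (v : ℝ × ℝ) : 0 ≤ ℓ.smulRight ℓ v v := mul_self_nonneg (ℓ v)
  obtain ⟨τ, hτ⟩ := mul_principalPart_eq (μ := μ) (ψ := ψ) (x := x) (ℓ.smulRight ℓ)
  have hN : 0 < 1 + x.1 ^ 2 + x.2 ^ 2 := by positivity
  refine pos_of_mul_pos_right (lt_of_lt_of_eq ?_ hτ.symm) hN.le
  exact add_pos_of_pos_of_nonneg (add_pos_of_pos_of_nonneg
    (mul_pos (sub_pos.2 hψ) (conicalTrace_smulRight_self_pos hℓ))
    (mul_nonneg (mul_nonneg (sub_nonneg.2 hμ) hN.le) (hsq _))) (hsq τ)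

section Linearization

variable {H : ℝ × ℝ →L[ℝ] ℝ × ℝ →L[ℝ] ℝ}

theorem hasFDerivAt_gradv (hH : HasFDerivAt (fderiv ℝ ψ) H x) :
    HasFDerivAt (gradv ψ) ((H.flip (1, 0)).prod (H.flip (0, 1))) x := by
  have hpd (e : ℝ × ℝ) : HasFDerivAt (fun y => fderiv ℝ ψ y e) (H.flip e) x := by
    simpa using hH.clm_apply (hasFDerivAt_const e x)
  exact (hpd (1, 0)).prodMk (hpd (0, 1))

theorem hasFDerivAt_chiF (hψ : DifferentiableAt ℝ ψ x) (hH : HasFDerivAt (fderiv ℝ ψ) H x) :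
    HasFDerivAt (chiF ψ) (-H.flip x) x := by
  rw [show chiF ψ = fun y => ψ y - fderiv ℝ ψ y y from funext fun _ => chiF_eq_sub_fderiv_apply]
  refine (hψ.hasFDerivAt.sub (hH.clm_apply (hasFDerivAt_id x))).congr_fderiv ?_
  simp

theorem hasFDerivAt_sqSound (hψ : DifferentiableAt ℝ ψ x) (hH : HasFDerivAt (fderiv ℝ ψ) H x) :
    HasFDerivAt (sqSound ψ) ((2 : ℝ) • H.flip (conicalVelocity ψ x)) x := by
  have hgrad := hasFDerivAt_gradv hH
  have h := (((hgrad.fst.pow 2).add (hgrad.snd.pow 2)).add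
    ((hasFDerivAt_chiF hψ hH).pow 2)).sub_const 1
  refine h.congr_fderiv (ContinuousLinearMap.ext fun v => ?_)
  have hv := apply_eq_fst_mul_add_snd_mul (H v) (gradv ψ x)
  simp only [Nat.add_one_sub_one, pow_one, nsmul_eq_mul, Nat.cast_ofNat,
    ContinuousLinearMap.fst_comp_prod, ContinuousLinearMap.snd_comp_prod, smul_neg, add_apply,
    smul_apply, ContinuousLinearMap.flip_apply, smul_eq_mul, neg_apply, conicalVelocity, map_sub,
    map_smul, sub_apply, hv]
  ring

theorem hasFDerivAt_conicalVelocity (hψ : DifferentiableAt ℝ ψ x)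
    (hH : HasFDerivAt (fderiv ℝ ψ) H x) :
    HasFDerivAt (conicalVelocity ψ) ((H.flip (1, 0)).prod (H.flip (0, 1))
      + (H.flip x).smulRight x - chiF ψ x • ContinuousLinearMap.id ℝ (ℝ × ℝ)) x := by
  refine ((hasFDerivAt_gradv hH).sub
    ((hasFDerivAt_chiF hψ hH).smul (hasFDerivAt_id x))).congr_fderiv ?_
  ext <;> simp <;> ring

/-- The first-order coefficient of the linear equation satisfied by the directional derivatives
of a solution `ψ` of `ℱ(μ, ψ) = 0`. -/
noncomputable def drift (μ : ℝ) (ψ : ℝ × ℝ → ℝ) (x : ℝ × ℝ) : ℝ × ℝ :=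
  let H := fderiv ℝ (fderiv ℝ ψ) x
  let q := conicalVelocity ψ x
  (2 * conicalTrace x H) • q + (2 * sqSound ψ x) • x
    - (2 * μ) • ((H q (1, 0), H q (0, 1)) + H q x • x - chiF ψ x • q)

theorem fderiv_Fop_apply (hψ : ContDiffAt ℝ 3 ψ x) (e : ℝ × ℝ) :
    fderiv ℝ (Fop μ ψ) x e = principalPart μ ψ x (fderiv ℝ (fderiv ℝ (fderiv ℝ ψ)) x e)
      + fderiv ℝ (fderiv ℝ ψ) x e (drift μ ψ x) := by
  have hψ₁ : DifferentiableAt ℝ ψ x := hψ.differentiableAt (by norm_num)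
  have hψ₂ : ContDiffAt ℝ 2 (fderiv ℝ ψ) x := hψ.fderiv_right (by norm_num)
  have hF : Fop μ ψ =ᶠ[𝓝 x] fun y => principalPart μ ψ y (fderiv ℝ (fderiv ℝ ψ) y) := by
    filter_upwards [hψ₂.eventually (by simp)] with y hy
    exact Fop_eq_principalPart (hy.differentiableAt two_ne_zero)
  have hH := (hψ₂.differentiableAt two_ne_zero).hasFDerivAt
  have hT := ((hψ₂.fderiv_right (m := 1) le_rfl).differentiableAt one_ne_zero).hasFDerivAt
  have hsymm := (hψ.isSymmSndFDerivAt (by norm_num)).eq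
  have htr := ((hasFDerivAt_bilin_apply_self hT hsymm (hasFDerivAt_const (1, 0) x)).add
    (hasFDerivAt_bilin_apply_self hT hsymm (hasFDerivAt_const (0, 1) x))).add
    (hasFDerivAt_bilin_apply_self hT hsymm (hasFDerivAt_id x))
  have hquad := hasFDerivAt_bilin_apply_self hT hsymm (hasFDerivAt_conicalVelocity hψ₁ hH)
  have hderiv := ((hasFDerivAt_sqSound hψ₁ hH).mul htr).sub (hquad.const_mul μ)
  rw [(hderiv.congr_of_eventuallyEq hF).fderiv, drift, principalPart_apply, conicalTrace_apply,
    conicalTrace_apply]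
  simp only [ContinuousLinearMap.comp_zero, smul_zero, add_zero, id_eq, ContinuousLinearMap.comp_id,
    smul_add, Pi.add_apply, ContinuousLinearMap.comp_sub, ContinuousLinearMap.comp_add,
    ContinuousLinearMap.comp_smulₛₗ, ringHom_apply, sub_apply, add_apply, smul_apply,
    ContinuousLinearMap.flip_apply, smul_eq_mul, hsymm _ e, ContinuousLinearMap.comp_apply,
    ContinuousLinearMap.prod_apply, apply_prodMk_comm _ (fderiv ℝ (fderiv ℝ ψ) x e),
    ContinuousLinearMap.smulRight_apply, map_smul, map_sub, map_add]
  ring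

theorem principalPart_add_fderiv_drift_eq_zero (hψ : ContDiffAt ℝ 3 ψ x) (hF : Fop μ ψ =ᶠ[𝓝 x] 0)
    (e : ℝ × ℝ) :
    principalPart μ ψ x (fderiv ℝ (fderiv ℝ fun y => fderiv ℝ ψ y e) x)
      + fderiv ℝ (fun y => fderiv ℝ ψ y e) x (drift μ ψ x) = 0 := by
  rw [fderiv_fderiv_fderiv_apply_const hψ, fderiv_fderiv_apply_const (hψ.of_le (by norm_num)),
    ← fderiv_Fop_apply hψ, hF.fderiv_eq, fderiv_zero]
  rfl

theorem continuousAt_principalPart (hψ : ContDiffAt ℝ 2 ψ x)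
    (H : ℝ × ℝ →L[ℝ] ℝ × ℝ →L[ℝ] ℝ) : ContinuousAt (fun y => principalPart μ ψ y H) x := by
  have hψ₁ := hψ.differentiableAt two_ne_zero
  have hH := ((hψ.fderiv_right (m := 1) le_rfl).differentiableAt one_ne_zero).hasFDerivAt
  have hsound := (hasFDerivAt_sqSound hψ₁ hH).continuousAt
  have hq := (hasFDerivAt_conicalVelocity hψ₁ hH).continuousAt
  simp only [principalPart_apply, conicalTrace_apply]
  fun_prop

theorem continuousAt_drift (hψ : ContDiffAt ℝ 2 ψ x) : ContinuousAt (drift μ ψ) x := by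
  have hψ₁ := hψ.differentiableAt two_ne_zero
  have hψ₂ : ContDiffAt ℝ 1 (fderiv ℝ ψ) x := hψ.fderiv_right le_rfl
  have hH := (hψ₂.differentiableAt one_ne_zero).hasFDerivAt
  have hsound := (hasFDerivAt_sqSound hψ₁ hH).continuousAt
  have hq := (hasFDerivAt_conicalVelocity hψ₁ hH).continuousAt
  have hχ := (hasFDerivAt_chiF hψ₁ hH).continuousAt
  have hD2 := (hψ₂.fderiv_right (m := 0) le_rfl).continuousAt
  unfold drift
  simp only [conicalTrace_apply]
  fun_prop

end Linearization

theorem dot_gradient_le_on_closure {Ω : Set (ℝ × ℝ)} (hΩ : IsOpen Ω)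
    (hcpt : IsCompact (closure Ω)) (hμ : μ ≤ 1) (hψ : ContDiffOn ℝ 3 ψ Ω) {g : ℝ × ℝ → ℝ × ℝ}
    (hgc : ContinuousOn g (closure Ω)) (hg : EqOn g (gradv ψ) Ω)
    (hF : ∀ x ∈ Ω, Fop μ ψ x = 0) (hsup : ∀ x ∈ Ω, 1 + x.1 ^ 2 + x.2 ^ 2 < ψ x ^ 2)
    (e : ℝ × ℝ) {m : ℝ} (hm : ∀ x ∈ frontier Ω, e.1 * (g x).1 + e.2 * (g x).2 ≤ m) :
    ∀ x ∈ closure Ω, e.1 * (g x).1 + e.2 * (g x).2 ≤ m := by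
  let u : ℝ × ℝ → ℝ := fun y => e.1 * (g y).1 + e.2 * (g y).2
  have hnhds {x : ℝ × ℝ} (hx : x ∈ Ω) : Ω ∈ 𝓝 x := hΩ.mem_nhds hx
  have hψ₃ {x : ℝ × ℝ} (hx : x ∈ Ω) : ContDiffAt ℝ 3 ψ x := hψ.contDiffAt (hnhds hx)
  have hψ₂ {x : ℝ × ℝ} (hx : x ∈ Ω) : ContDiffAt ℝ 2 ψ x := (hψ₃ hx).of_le (by norm_num)
  have hu : EqOn u (fun y => fderiv ℝ ψ y e) Ω := fun y hy => by
    simp only [u, hg hy, gradv, pd1, pd2, apply_eq_fst_mul_add_snd_mul (fderiv ℝ ψ y) e]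
  refine le_on_closure_of_elliptic hΩ hcpt (u := u) (L := principalPart μ ψ) (b := drift μ ψ)
    (ℓ := ContinuousLinearMap.fst ℝ ℝ ℝ) (by fun_prop) ?_ ?_ ?_ ?_ ?_ ?_ hm
  · exact ((hψ.fderiv_of_isOpen hΩ (by norm_num)).clm_apply contDiffOn_const).congr hu
  · exact fun x hx _ => principalPart_nonpos hμ (hsup x hx).le
  · refine fun x hx => principalPart_smulRight_self_pos hμ (hsup x hx) fun h => ?_
    simpa using DFunLike.congr_fun h (1, 0)
  · exact fun x hx => (continuousAt_principalPart (hψ₂ hx) _).continuousWithinAt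
  · exact fun x hx => (continuousAt_drift (hψ₂ hx)).fst.continuousWithinAt
  · intro x hx
    have hev : u =ᶠ[𝓝 x] fun y => fderiv ℝ ψ y e := hu.eventuallyEq_of_mem (hnhds hx)
    rw [hev.fderiv.fderiv_eq, hev.fderiv_eq, principalPart_add_fderiv_drift_eq_zero (hψ₃ hx)
      (eventually_of_mem (hnhds hx) hF)]

end ConicalOperator

theorem gradient_max_on_boundary_general {Ω : Set (ℝ × ℝ)} (hΩ : IsOpen Ω)
    (hcpt : IsCompact (closure Ω)) {μ : ℝ} (hμ : μ ≤ 1) {ψ : ℝ × ℝ → ℝ}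
    (hψ : ContDiffOn ℝ 3 ψ Ω) {g : ℝ × ℝ → ℝ × ℝ} (hgc : ContinuousOn g (closure Ω))
    (hg : EqOn g (gradv ψ) Ω) (hF : ∀ x ∈ Ω, Fop μ ψ x = 0)
    (hsup : ∀ x ∈ Ω, 1 + x.1 ^ 2 + x.2 ^ 2 < ψ x ^ 2) :
    sSup ((fun y => √((g y).1 ^ 2 + (g y).2 ^ 2)) '' closure Ω)
      = sSup ((fun y => √((g y).1 ^ 2 + (g y).2 ^ 2)) '' frontier Ω) := by
  refine sSup_image_closure_eq_sSup_image_frontier hcpt (by fun_prop) fun m hm x hx => ?_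
  refine sqrt_sq_add_sq_le_iff.2 fun θ => ?_
  exact dot_gradient_le_on_closure hΩ hcpt hμ hψ hgc hg hF hsup (cos θ, sin θ)
    (fun y hy => sqrt_sq_add_sq_le_iff.1 (hm y hy) θ) x hx

/-- Interior gradient maximum principle: if `ψ ∈ C¹(cl Ω) ∩ C³(Ω)` solves
`ℱ(μ,ψ) = 0` in `Ω` with `ψ > √(1+|ξ|²)` in `Ω`, then the maximum of `|Dψ|` over the
closure is attained on the boundary. Here `g` is the continuous extension of the
gradient of `ψ` to the closure. -/
theorem gradient_max_on_boundary
    (Ω : Set (ℝ × ℝ)) (hΩo : IsOpen Ω) (hΩb : Bornology.IsBounded Ω)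
    (μ : ℝ) (hμ0 : 0 ≤ μ) (hμ1 : μ ≤ 1)
    (ψ : ℝ × ℝ → ℝ)
    (hψc : ContinuousOn ψ (closure Ω)) (hψ3 : ContDiffOn ℝ 3 ψ Ω)
    (g : ℝ × ℝ → ℝ × ℝ)
    (hgc : ContinuousOn g (closure Ω))
    (hgeq : ∀ x ∈ Ω, g x = (pd1 ψ x, pd2 ψ x))
    (heq : ∀ x ∈ Ω, Fop μ ψ x = 0)
    (hsup : ∀ x ∈ Ω, Real.sqrt (1 + x.1 ^ 2 + x.2 ^ 2) < ψ x) :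
    sSup ((fun y => Real.sqrt ((g y).1 ^ 2 + (g y).2 ^ 2)) '' closure Ω)
      = sSup ((fun y => Real.sqrt ((g y).1 ^ 2 + (g y).2 ^ 2)) '' frontier Ω) :=
  gradient_max_on_boundary_general hΩo hΩb.isCompact_closure hμ1 hψ3 hgc hgeq heq
    fun x hx => (sqrt_lt' ((sqrt_nonneg _).trans_lt (hsup x hx))).1 (hsup x hx)
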